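/- arXiv:1801.01054 — 4 statements merged into one kernel-verified Lean document; each statement's English description precedes it below -/
import Mathlib

section
/- Let h = 2^d with d ∈ ℕ and w ≥ 2. The FHT pattern set H_{h,w} contains exactly w·h patterns, i.e. |H_{h,w}| = w·h. -/
/-!
FHT patterns. Pixels are pairs `(i, j) : ℕ × ℕ` (row `i`, column `j`).
-/

/-- Width-cyclic translation `tran_{a,b}`: shift rows up by `a` and columns by `b`
cyclically modulo the image width `w`. -/
def tran (w a b : ℕ) (T : Finset (ℕ × ℕ)) : Finset (ℕ × ℕ) :=
  T.image fun p => (p.1 + a, (p.2 + b) % w)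

/-- The column of the (unique, for FHT patterns) pixel of `T` in row `i`. -/
def colAt (T : Finset (ℕ × ℕ)) (i : ℕ) : ℕ :=
  ((T.filter fun p => p.1 = i).image Prod.snd).sup id

/-- Horizontal span `Δ(T) = (j_top - j_bot) mod w` of a pattern of height `h`. -/
def span (w h : ℕ) (T : Finset (ℕ × ℕ)) : ℕ :=
  (colAt T (h - 1) + w - colAt T 0) % w

/-- The FHT pattern sets `H_k` (mostly vertical, inclined to the right) at image width `w`:
`H_0` consists of the single bottom pixels, and `H_{k}` is obtained by stacking a translated
copy of each `T ∈ H_{k-1}` on top of itself, with horizontal shift `Δ(T) + s`, `s ∈ {0, 1}`.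
`H_{h,w}` for `h = 2 ^ d` is `FHT w d`. -/
def FHT (w : ℕ) : ℕ → Finset (Finset (ℕ × ℕ))
  | 0 => (Finset.range w).image fun j => ({(0, j)} : Finset (ℕ × ℕ))
  | k + 1 =>
      ((FHT w k) ×ˢ ({0, 1} : Finset ℕ)).image
        fun q => q.1 ∪ tran w (2 ^ k) (span w (2 ^ k) q.1 + q.2) q.1

theorem fht_inv (w k : ℕ) : ∀ T ∈ FHT w k,
    (∀ p ∈ T, p.1 < 2 ^ k) ∧ ∃ j, (0, j) ∈ T ∧ ∀ j', (0, j') ∈ T → j' = j := by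
  induction k with
  | zero =>
    intro T hT
    simp only [FHT, Finset.mem_image] at hT
    obtain ⟨j, _, rfl⟩ := hT
    refine ⟨by simp, j, by simp, by simp⟩
  | succ k ih =>
    intro T hT
    simp only [FHT, Finset.mem_image, Finset.mem_product] at hT
    obtain ⟨⟨U, s⟩, ⟨hU, _⟩, rfl⟩ := hT
    obtain ⟨h1, j, hj, hu⟩ := ih U hU
    have hpos : 0 < 2 ^ k := by positivity
    refine ⟨?_, j, Finset.mem_union_left _ hj, ?_⟩
    · intro p hp
      rw [pow_succ]
      rcases Finset.mem_union.1 hp with hp | hp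
      · have := h1 p hp
        omega
      · simp only [tran, Finset.mem_image] at hp
        obtain ⟨q, hq, rfl⟩ := hp
        have := h1 q hq
        simp only
        omega
    · intro j' hp
      rcases Finset.mem_union.1 hp with hp | hp
      · exact hu j' hp
      · simp only [tran, Finset.mem_image, Prod.mk.injEq] at hp
        obtain ⟨q, hq, h, _⟩ := hp
        omega

theorem fht_sub (w n b c : ℕ) (T U : Finset (ℕ × ℕ)) (hT : ∀ p ∈ T, p.1 < n)
    (h : T ∪ tran w n b T = U ∪ tran w n c U) : T ⊆ U := by
  intro p hp
  have hm : p ∈ U ∪ tran w n c U := h ▸ Finset.mem_union_left _ hp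
  rcases Finset.mem_union.1 hm with hm | hm
  · exact hm
  · simp only [tran, Finset.mem_image] at hm
    obtain ⟨q, _, rfl⟩ := hm
    have := hT _ hp
    simp only at this
    omega

theorem fht_shift (w n b c : ℕ) (T : Finset (ℕ × ℕ)) (hT : ∀ p ∈ T, p.1 < n) (j : ℕ)
    (hj : (0, j) ∈ T) (hu : ∀ j', (0, j') ∈ T → j' = j)
    (h : T ∪ tran w n b T = T ∪ tran w n c T) : (j + b) % w = (j + c) % w := by
  have hm : (n, (j + b) % w) ∈ T ∪ tran w n c T := by
    rw [← h]
    refine Finset.mem_union_right _ (Finset.mem_image.2 ⟨(0, j), hj, by simp⟩)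
  rcases Finset.mem_union.1 hm with hm | hm
  · exact absurd (hT _ hm) (lt_irrefl _)
  · simp only [tran, Finset.mem_image, Prod.mk.injEq] at hm
    obtain ⟨⟨a, i⟩, hq, h1, h2⟩ := hm
    obtain rfl : a = 0 := by simpa using h1
    rw [← h2, hu i hq]

theorem succ_mod_ne (w a : ℕ) (hw : 2 ≤ w) (h : a % w = (a + 1) % w) : False := by
  have h1 : a ≡ a + 1 [MOD w] := h
  have h2 := (Nat.modEq_iff_dvd' (Nat.le_succ a)).1 h1
  simp at h2
  omega

/-- For `h = 2 ^ d` and `w ≥ 2`, the FHT pattern set `H_{h,w}` contains exactly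
`w · h` patterns. -/
theorem fht_card (w d : ℕ) (hw : 2 ≤ w) : (FHT w d).card = w * 2 ^ d := by
  induction d with
  | zero =>
    rw [FHT, Finset.card_image_of_injective]
    · simp
    · intro a b h
      simpa using h
  | succ k ih =>
    rw [FHT, Finset.card_image_of_injOn]
    · rw [Finset.card_product, ih, pow_succ]
      simp [mul_assoc]
    · rintro ⟨T, s⟩ hT ⟨U, t⟩ hU h
      simp only [Finset.coe_product, Set.mem_prod, Finset.mem_coe, Finset.mem_insert,
        Finset.mem_singleton] at hT hU
      simp only at h
      obtain ⟨hT, hs⟩ := hT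
      obtain ⟨hU, ht⟩ := hU
      obtain ⟨h1, j, hj, hu⟩ := fht_inv w k T hT
      obtain rfl : T = U := Finset.Subset.antisymm (fht_sub _ _ _ _ _ _ h1 h)
        (fht_sub _ _ _ _ _ _ (fht_inv w k U hU).1 h.symm)
      have h2 := fht_shift _ _ _ _ _ h1 j hj hu h
      rcases hs with rfl | rfl <;> rcases ht with rfl | rfl
      · rfl
      · exact (succ_mod_ne w _ hw h2).elim
      · exact (succ_mod_ne w _ hw h2.symm).elim
      · rfl
end

section
/- Let h = 2^d with d ≥ 1 and w ≥ 2, and let I_t = {p_{ij} : h/2 ≤ i ≤ h−1} be the top half of the image. Then the family of restrictions {tran_{−h/2,0}(T ∩ I_t) : T ∈ H_{h,w}} (i.e. the top halves of the FHT patterns, translated down by h/2 rows) is exactly the FHT pattern set H_{h/2,w} of height h/2. The analogous statement holds for the bottom half I_b = {p_{ij} : 0 ≤ i < h/2}: {T ∩ I_b : T ∈ H_{h,w}} = H_{h/2,w}. -/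
/-- The pattern of height `h` whose pixel in row `i` is in column `f i`. -/
def pat (h : ℕ) (f : ℕ → ℕ) : Finset (ℕ × ℕ) :=
  (Finset.range h).image fun i => (i, f i)

theorem mem_pat (h : ℕ) (f : ℕ → ℕ) (p : ℕ × ℕ) : p ∈ pat h f ↔ p.1 < h ∧ p.2 = f p.1 := by
  rcases p with ⟨a, b⟩
  simp only [pat, Finset.mem_image, Finset.mem_range, Prod.mk.injEq]
  constructor
  · rintro ⟨i, hi, rfl, rfl⟩
    exact ⟨hi, rfl⟩
  · rintro ⟨h1, h2⟩
    exact ⟨a, h1, rfl, h2.symm⟩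

theorem tran_tran (w a b a' b' : ℕ) (T : Finset (ℕ × ℕ)) :
    tran w a b (tran w a' b' T) = tran w (a' + a) (b' + b) T := by
  simp only [tran, Finset.image_image]
  congr 1
  funext p
  simp [Nat.add_assoc]

theorem tran_pat_zero (w b h : ℕ) (f : ℕ → ℕ) :
    tran w 0 b (pat h f) = pat h fun i => (f i + b) % w := by
  simp only [tran, pat, Finset.image_image]
  rfl

theorem colAt_pat (h : ℕ) (f : ℕ → ℕ) (i : ℕ) (hi : i < h) : colAt (pat h f) i = f i := by
  have : (pat h f).filter (fun p => p.1 = i) = {(i, f i)} := by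
    ext ⟨a, b⟩
    simp only [Finset.mem_filter, mem_pat, Finset.mem_singleton, Prod.mk.injEq]
    constructor
    · rintro ⟨⟨_, h2⟩, rfl⟩
      exact ⟨rfl, h2⟩
    · rintro ⟨rfl, rfl⟩
      exact ⟨⟨hi, rfl⟩, rfl⟩
  simp [colAt, this]

theorem shift_sub (w b x y : ℕ) (hw : 0 < w) (hx : x < w) (hy : y < w) :
    ((x + b) % w + w - (y + b) % w) % w = (x + w - y) % w := by
  have h1 : (y + b) % w < w := Nat.mod_lt _ hw
  have key : (x + b) % w + w - (y + b) % w ≡ x + w - y [MOD w] := by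
    apply Nat.ModEq.add_right_cancel' (y + b)
    calc (x + b) % w + w - (y + b) % w + (y + b)
        ≡ (x + b) % w + w - (y + b) % w + (y + b) % w [MOD w] :=
          Nat.ModEq.add_left _ (Nat.mod_modEq _ _).symm
      _ = (x + b) % w + w := by omega
      _ ≡ (x + b) + w [MOD w] := Nat.ModEq.add_right _ (Nat.mod_modEq _ _)
      _ = x + w - y + (y + b) := by omega
  exact key

theorem FHT_pat (w : ℕ) (hw : 0 < w) (k : ℕ) : ∀ T ∈ FHT w k,
    ∃ f : ℕ → ℕ, (∀ i, f i < w) ∧ T = pat (2 ^ k) f := by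
  induction k with
  | zero =>
    intro T hT
    simp only [FHT, Finset.mem_image, Finset.mem_range] at hT
    obtain ⟨j, hj, rfl⟩ := hT
    exact ⟨fun _ => j, fun _ => hj, by simp [pat]⟩
  | succ k ih =>
    intro T hT
    simp only [FHT, Finset.mem_image, Finset.mem_product] at hT
    obtain ⟨⟨S, s⟩, ⟨hS, _⟩, rfl⟩ := hT
    obtain ⟨f, hf, rfl⟩ := ih S hS
    dsimp only
    generalize span w (2 ^ k) (pat (2 ^ k) f) + s = c
    refine ⟨fun i => if i < 2 ^ k then f i else (f (i - 2 ^ k) + c) % w, ?_, ?_⟩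
    · intro i
      dsimp only
      split_ifs
      · exact hf i
      · exact Nat.mod_lt _ hw
    · ext ⟨a, b⟩
      simp only [Finset.mem_union, tran, Finset.mem_image, mem_pat, Prod.mk.injEq, pow_succ]
      constructor
      · rintro (⟨h1, h2⟩ | ⟨⟨a', b'⟩, ⟨h1, h2⟩, h3, h4⟩)
        · refine ⟨by omega, ?_⟩
          rw [if_pos h1]
          exact h2
        · dsimp only at h1 h2 h3 h4
          subst h3 h2 h4
          refine ⟨by omega, ?_⟩
          rw [if_neg (by omega), Nat.add_sub_cancel]
      · rintro ⟨h1, h2⟩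
        by_cases h : a < 2 ^ k
        · left
          rw [if_pos h] at h2
          exact ⟨h, h2⟩
        · right
          rw [if_neg h] at h2
          exact ⟨(a - 2 ^ k, f (a - 2 ^ k)), ⟨by dsimp only; omega, rfl⟩, by dsimp only; omega,
            h2.symm⟩

theorem span_tran (w : ℕ) (hw : 0 < w) (k b : ℕ) (T : Finset (ℕ × ℕ)) (hT : T ∈ FHT w k) :
    span w (2 ^ k) (tran w 0 b T) = span w (2 ^ k) T := by
  obtain ⟨f, hf, rfl⟩ := FHT_pat w hw k T hT
  have hp : 0 < 2 ^ k := by positivity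
  rw [tran_pat_zero]
  simp only [span]
  rw [colAt_pat _ _ _ (by omega), colAt_pat _ _ _ hp, colAt_pat _ _ _ (by omega),
    colAt_pat _ _ _ hp]
  exact shift_sub w b _ _ hw (hf _) (hf _)

theorem tran_union (w a b : ℕ) (S T : Finset (ℕ × ℕ)) :
    tran w a b (S ∪ T) = tran w a b S ∪ tran w a b T := by
  simp only [tran, Finset.image_union]

theorem tran_mem (w : ℕ) (hw : 0 < w) (k b : ℕ) : ∀ T ∈ FHT w k, tran w 0 b T ∈ FHT w k := by
  induction k with
  | zero =>
    intro T hT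
    simp only [FHT, Finset.mem_image, Finset.mem_range] at hT ⊢
    obtain ⟨j, hj, rfl⟩ := hT
    exact ⟨(j + b) % w, Nat.mod_lt _ hw, by simp [tran]⟩
  | succ k ih =>
    intro T hT
    simp only [FHT, Finset.mem_image, Finset.mem_product] at hT ⊢
    obtain ⟨⟨S, s⟩, ⟨hS, hs⟩, rfl⟩ := hT
    refine ⟨(tran w 0 b S, s), ⟨ih S hS, hs⟩, ?_⟩
    dsimp only at hS ⊢
    rw [span_tran w hw k b S hS, tran_union, tran_tran, tran_tran]
    congr 2 <;> omega

theorem bottom_half (w : ℕ) (hw : 0 < w) (d c : ℕ) (T : Finset (ℕ × ℕ)) (hT : T ∈ FHT w d) :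
    (T ∪ tran w (2 ^ d) c T).filter (fun p => p.1 < 2 ^ d) = T := by
  obtain ⟨f, hf, rfl⟩ := FHT_pat w hw d T hT
  ext ⟨a, b⟩
  simp only [Finset.mem_filter, Finset.mem_union, tran, Finset.mem_image, Prod.mk.injEq]
  constructor
  · rintro ⟨h | ⟨p, _, h3, _⟩, h1⟩
    · exact h
    · omega
  · intro h
    exact ⟨Or.inl h, ((mem_pat _ _ _).1 h).1⟩

theorem top_half (w : ℕ) (hw : 0 < w) (d c : ℕ) (T : Finset (ℕ × ℕ)) (hT : T ∈ FHT w d) :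
    ((T ∪ tran w (2 ^ d) c T).filter (fun p => 2 ^ d ≤ p.1)).image
      (fun p => (p.1 - 2 ^ d, p.2)) = tran w 0 c T := by
  obtain ⟨f, hf, rfl⟩ := FHT_pat w hw d T hT
  have : (pat (2 ^ d) f ∪ tran w (2 ^ d) c (pat (2 ^ d) f)).filter (fun p => 2 ^ d ≤ p.1)
      = tran w (2 ^ d) c (pat (2 ^ d) f) := by
    ext p
    simp only [Finset.mem_filter, Finset.mem_union]
    constructor
    · rintro ⟨h | h, h1⟩
      · have := ((mem_pat _ _ _).1 h).1
        omega
      · exact h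
    · intro h
      refine ⟨Or.inr h, ?_⟩
      simp only [tran, Finset.mem_image] at h
      obtain ⟨q, _, rfl⟩ := h
      exact Nat.le_add_left _ _
  rw [this]
  simp only [tran, Finset.image_image]
  congr 1
  funext p
  simp

theorem tran_self (w : ℕ) (hw : 0 < w) (d c : ℕ) (hc : c % w = 0) (T : Finset (ℕ × ℕ))
    (hT : T ∈ FHT w d) : tran w 0 c T = T := by
  obtain ⟨f, hf, rfl⟩ := FHT_pat w hw d T hT
  rw [tran_pat_zero]
  congr 1
  funext i
  rw [Nat.add_mod, hc, Nat.add_zero, Nat.mod_mod, Nat.mod_eq_of_lt (hf i)]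

/-- For `h = 2 ^ (d+1)` (so `d + 1 ≥ 1`) and `w ≥ 2`: the top halves of the FHT patterns,
translated down by `h / 2 = 2 ^ d` rows, form exactly the FHT pattern set of height `2 ^ d`,
and likewise the bottom halves form exactly the FHT pattern set of height `2 ^ d`. -/
theorem fht_halves (w d : ℕ) (hw : 2 ≤ w) :
    ((FHT w (d + 1)).image fun T =>
        (T.filter fun p => 2 ^ d ≤ p.1).image fun p => (p.1 - 2 ^ d, p.2)) = FHT w d ∧
    ((FHT w (d + 1)).image fun T => T.filter fun p => p.1 < 2 ^ d) = FHT w d := by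
  have h0 : 0 < w := by omega
  constructor
  · ext T
    simp only [FHT, Finset.mem_image, Finset.mem_product]
    constructor
    · rintro ⟨_, ⟨⟨S, s⟩, ⟨hS, _⟩, rfl⟩, rfl⟩
      dsimp only at hS ⊢
      rw [top_half w h0 d _ S hS]
      exact tran_mem w h0 d _ S hS
    · intro hT
      have hm := tran_mem w h0 d (w - span w (2 ^ d) T) T hT
      refine ⟨_, ⟨(tran w 0 (w - span w (2 ^ d) T) T, 0), ⟨hm, by simp⟩, rfl⟩, ?_⟩
      dsimp only
      rw [top_half w h0 d _ _ hm, tran_tran, span_tran w h0 d _ T hT]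
      have hlt : span w (2 ^ d) T < w := Nat.mod_lt _ h0
      apply tran_self w h0 d _ _ T hT
      have : w - span w (2 ^ d) T + (span w (2 ^ d) T + 0) = w := by omega
      rw [this, Nat.mod_self]
  · ext T
    simp only [FHT, Finset.mem_image, Finset.mem_product]
    constructor
    · rintro ⟨_, ⟨⟨S, s⟩, ⟨hS, _⟩, rfl⟩, rfl⟩
      dsimp only at hS ⊢
      rw [bottom_half w h0 d _ S hS]
      exact hS
    · intro hT
      exact ⟨_, ⟨(T, 0), ⟨hT, by simp⟩, rfl⟩, bottom_half w h0 d _ T hT⟩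
end

section
/- Let h = 2^d with d ≥ 1 and w ≥ 2, and let I_b = {p_{ij} : 0 ≤ i < h/2} be the bottom half of the image. For every T ∈ H_{h,w} there exists a unique T' ∈ H_{h,w} such that T ∩ I_b = T ∩ T' (the bottom-sibling of T). The analogous statement holds with I_b replaced by the top half I_t = {p_{ij} : h/2 ≤ i ≤ h−1} (top-siblings). -/
/-- Graph pattern of a column function. -/
def gpat (w n : ℕ) (f : ℕ → ZMod w) : Finset (ℕ × ℕ) :=
  (Finset.range n).image fun i => (i, (f i).val)

/-- The column functions of FHT patterns. -/
def isPat (w : ℕ) : ℕ → (ℕ → ZMod w) → Prop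
  | 0, _ => True
  | k + 1, f => isPat w k f ∧ ∃ s : ZMod w, (s = 0 ∨ s = 1) ∧
      ∀ i < 2 ^ k, f (i + 2 ^ k) = f i + (f (2 ^ k - 1) - f 0) + s

theorem mem_gpat {w n : ℕ} {f : ℕ → ZMod w} {p : ℕ × ℕ} :
    p ∈ gpat w n f ↔ p.1 < n ∧ p.2 = (f p.1).val := by
  rcases p with ⟨a, b⟩
  simp only [gpat, Finset.mem_image, Finset.mem_range, Prod.mk.injEq]
  constructor
  · rintro ⟨i, hi, rfl, rfl⟩
    exact ⟨hi, rfl⟩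
  · rintro ⟨hi, rfl⟩
    exact ⟨a, hi, rfl, rfl⟩

theorem gpat_eq_iff {w n : ℕ} [NeZero w] {f g : ℕ → ZMod w} :
    gpat w n f = gpat w n g ↔ ∀ i < n, f i = g i := by
  constructor
  · intro h i hi
    have : (i, (f i).val) ∈ gpat w n g := by
      rw [← h]; exact mem_gpat.2 ⟨hi, rfl⟩
    exact ZMod.val_injective w (mem_gpat.1 this).2
  · intro h
    ext p
    simp only [mem_gpat]
    constructor
    · rintro ⟨a, b⟩
      exact ⟨a, by rw [b, h _ a]⟩
    · rintro ⟨a, b⟩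
      exact ⟨a, by rw [b, h _ a]⟩

theorem gpat_inter_iff {w n : ℕ} [NeZero w] {f g : ℕ → ZMod w} (P : ℕ → Prop) [DecidablePred P] :
    (gpat w n f ∩ gpat w n g = (gpat w n f).filter fun p => P p.1) ↔
      ∀ i < n, (f i = g i ↔ P i) := by
  constructor
  · intro h i hi
    have := Finset.ext_iff.1 h (i, (f i).val)
    simp only [Finset.mem_inter, Finset.mem_filter, mem_gpat, hi, true_and] at this
    rw [← this]
    exact ⟨fun h => by rw [h], fun h => ZMod.val_injective w h⟩
  · intro h
    ext p
    simp only [Finset.mem_inter, Finset.mem_filter, mem_gpat]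
    constructor
    · rintro ⟨⟨a, b⟩, _, c⟩
      exact ⟨⟨a, b⟩, (h _ a).1 (ZMod.val_injective w (b.symm.trans c))⟩
    · rintro ⟨⟨a, b⟩, c⟩
      exact ⟨⟨a, b⟩, a, by rw [b, (h _ a).2 c]⟩

theorem isPat_congr {w : ℕ} : ∀ (k : ℕ) {f g : ℕ → ZMod w}, (∀ i < 2 ^ k, f i = g i) →
    isPat w k f → isPat w k g
  | 0, _, _, _, _ => trivial
  | k + 1, f, g, h, hf => by
    obtain ⟨h1, s, hs, h2⟩ := hf
    have hp : 0 < 2 ^ k := by positivity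
    have e : 2 ^ (k + 1) = 2 ^ k + 2 ^ k := by ring
    rw [e] at h
    refine ⟨isPat_congr k (fun i hi => h i (by omega)) h1, s, hs, fun i hi => ?_⟩
    rw [← h _ (by omega), ← h _ (by omega), ← h _ (by omega), ← h _ (by omega)]
    exact h2 i hi

theorem isPat_shift {w : ℕ} (c : ZMod w) : ∀ (k : ℕ) {f : ℕ → ZMod w},
    isPat w k f → isPat w k (fun i => f i + c)
  | 0, _, _ => trivial
  | k + 1, f, hf => by
    obtain ⟨h1, s, hs, h2⟩ := hf
    refine ⟨isPat_shift c k h1, s, hs, fun i hi => ?_⟩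
    simp only [h2 i hi]
    ring

theorem colAt_gpat {w n : ℕ} {f : ℕ → ZMod w} {i : ℕ} (hi : i < n) :
    colAt (gpat w n f) i = (f i).val := by
  have : ((gpat w n f).filter fun p => p.1 = i) = {(i, (f i).val)} := by
    ext ⟨a, b⟩
    simp only [Finset.mem_filter, mem_gpat, Finset.mem_singleton, Prod.mk.injEq]
    constructor
    · rintro ⟨⟨_, h⟩, rfl⟩
      exact ⟨rfl, h⟩
    · rintro ⟨rfl, h⟩
      exact ⟨⟨hi, h⟩, rfl⟩
  simp [colAt, this]

theorem span_gpat {w n : ℕ} [NeZero w] {f : ℕ → ZMod w} (hn : 0 < n) :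
    ((span w n (gpat w n f) : ℕ) : ZMod w) = f (n - 1) - f 0 := by
  have h0 := ZMod.val_lt (f 0)
  rw [span, colAt_gpat (by omega), colAt_gpat hn, ZMod.natCast_mod, Nat.cast_sub (by omega)]
  simp

theorem stack_gpat {w n b : ℕ} [NeZero w] {f g : ℕ → ZMod w} (h1 : ∀ i < n, g i = f i)
    (h2 : ∀ i < n, g (i + n) = f i + b) :
    gpat w n f ∪ tran w n b (gpat w n f) = gpat w (n + n) g := by
  ext ⟨x, y⟩
  simp only [Finset.mem_union, tran, Finset.mem_image, mem_gpat, Prod.exists, Prod.mk.injEq]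
  have key : ∀ i, ((f i).val + b) % w = (f i + b).val := by
    intro i
    rw [← ZMod.val_natCast]
    simp
  constructor
  · rintro (⟨a, c⟩ | ⟨i, j, ⟨hi, rfl⟩, rfl, rfl⟩)
    · exact ⟨by omega, by rw [c, h1 x a]⟩
    · exact ⟨by omega, by rw [h2 i hi, key]⟩
  · rintro ⟨a, c⟩
    by_cases hx : x < n
    · left
      exact ⟨hx, by rw [c, h1 x hx]⟩
    · right
      refine ⟨x - n, (f (x - n)).val, ⟨by omega, rfl⟩, by omega, ?_⟩
      rw [key, ← h2 (x - n) (by omega), c, Nat.sub_add_cancel (by omega)]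

theorem mem_FHT_iff {w : ℕ} [NeZero w] : ∀ (k : ℕ) (T : Finset (ℕ × ℕ)),
    T ∈ FHT w k ↔ ∃ f, isPat w k f ∧ T = gpat w (2 ^ k) f
  | 0, T => by
    simp only [FHT, Finset.mem_image, Finset.mem_range]
    constructor
    · rintro ⟨j, hj, rfl⟩
      refine ⟨fun _ => (j : ZMod w), trivial, ?_⟩
      simp [gpat, ZMod.val_natCast, Nat.mod_eq_of_lt hj]
    · rintro ⟨f, _, rfl⟩
      exact ⟨(f 0).val, ZMod.val_lt _, by simp [gpat]⟩
  | k + 1, T => by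
    have hp : 0 < 2 ^ k := by positivity
    have e : 2 ^ (k + 1) = 2 ^ k + 2 ^ k := by ring
    simp only [FHT, Finset.mem_image, Finset.mem_product, Prod.exists, mem_FHT_iff k]
    rw [e]
    constructor
    · rintro ⟨B, s, ⟨⟨f, hf, rfl⟩, hs⟩, rfl⟩
      simp only [Finset.mem_insert, Finset.mem_singleton] at hs
      refine ⟨fun i => if i < 2 ^ k then f i else
        f (i - 2 ^ k) + (f (2 ^ k - 1) - f 0) + (s : ZMod w), ⟨?_, s, ?_, ?_⟩, ?_⟩
      · exact isPat_congr k (fun i hi => by simp [hi]) hf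
      · rcases hs with rfl | rfl <;> simp
      · intro i hi
        simp [hi]
      · apply stack_gpat
        · intro i hi
          simp [hi]
        · intro i hi
          push_cast
          rw [span_gpat hp]
          simp [add_assoc]
    · rintro ⟨f, ⟨hf, s, hs, h2⟩, rfl⟩
      obtain ⟨t, ht, rfl⟩ : ∃ t : ℕ, (t = 0 ∨ t = 1) ∧ s = (t : ZMod w) := by
        rcases hs with rfl | rfl
        · exact ⟨0, by simp⟩
        · exact ⟨1, by simp⟩
      refine ⟨gpat w (2 ^ k) f, t, ⟨⟨f, hf, rfl⟩, by simpa using ht⟩, ?_⟩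
      apply stack_gpat
      · intro i _
        rfl
      · intro i hi
        push_cast
        rw [span_gpat hp, h2 i hi, add_assoc]

/-- For `h = 2 ^ (d+1)` (so `d + 1 ≥ 1`) and `w ≥ 2`: every `T ∈ H_{h,w}` has a unique
bottom-sibling, i.e. a unique `T' ∈ H_{h,w}` with `T ∩ T' = T ∩ I_b` where
`I_b = {p_{ij} : i < h/2}` is the bottom half of the image; and likewise a unique
top-sibling with respect to the top half `I_t = {p_{ij} : h/2 ≤ i}`. -/
theorem fht_siblings (w d : ℕ) (hw : 2 ≤ w) :
    (∀ T ∈ FHT w (d + 1), ∃! T', T' ∈ FHT w (d + 1) ∧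
        T ∩ T' = T.filter fun p => p.1 < 2 ^ d) ∧
    (∀ T ∈ FHT w (d + 1), ∃! T', T' ∈ FHT w (d + 1) ∧
        T ∩ T' = T.filter fun p => 2 ^ d ≤ p.1) := by
  haveI : NeZero w := ⟨by omega⟩
  haveI : Fact (1 < w) := ⟨by omega⟩
  have hp : 0 < 2 ^ d := by positivity
  have e : 2 ^ (d + 1) = 2 ^ d + 2 ^ d := by ring
  have flip : ∀ s s1 s2 : ZMod w, (s = 0 ∨ s = 1) → (s1 = 0 ∨ s1 = 1) → (s2 = 0 ∨ s2 = 1) →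
      s1 ≠ s → s2 ≠ s → s1 = s2 := by
    rintro s s1 s2 (rfl | rfl) (rfl | rfl) (rfl | rfl) <;> simp
  have hne : ∀ s : ZMod w, (s = 0 ∨ s = 1) → (1 - s = 0 ∨ 1 - s = 1) ∧ s - (1 - s) ≠ 0 := by
    rintro s (rfl | rfl) <;> simp
  constructor
  · intro T hT
    obtain ⟨f, ⟨hf, s, hs, h2⟩, rfl⟩ := (mem_FHT_iff _ _).1 hT
    have uniq : ∀ g, isPat w (d + 1) g → (∀ i < 2 ^ (d + 1), (f i = g i ↔ i < 2 ^ d)) →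
        ∃ s', (s' = 0 ∨ s' = 1) ∧ s' ≠ s ∧
          ∀ i < 2 ^ d, g i = f i ∧ g (i + 2 ^ d) = f i + (f (2 ^ d - 1) - f 0) + s' := by
      rintro g ⟨hg, s', hs', h2'⟩ h
      have hb : ∀ i < 2 ^ d, g i = f i := fun i hi => ((h i (by omega)).2 hi).symm
      have ht : ∀ i < 2 ^ d, g (i + 2 ^ d) = f i + (f (2 ^ d - 1) - f 0) + s' := by
        intro i hi
        rw [h2' i hi, hb i hi, hb _ (by omega), hb 0 hp]
      refine ⟨s', hs', ?_, fun i hi => ⟨hb i hi, ht i hi⟩⟩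
      rintro rfl
      have := (h (0 + 2 ^ d) (by omega)).1 (by rw [h2 0 hp, ht 0 hp])
      omega
    let g : ℕ → ZMod w := fun i => if i < 2 ^ d then f i else
        f (i - 2 ^ d) + (f (2 ^ d - 1) - f 0) + (1 - s)
    have hg : isPat w (d + 1) g := by
      refine ⟨isPat_congr d (fun i hi => by simp [g, hi]) hf, 1 - s, (hne s hs).1, ?_⟩
      intro i hi
      simp [g, hi]
    have hgi : ∀ i < 2 ^ (d + 1), (f i = g i ↔ i < 2 ^ d) := by
      intro i hi
      by_cases h : i < 2 ^ d
      · simp [g, h]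
      · have h3 := h2 (i - 2 ^ d) (by omega)
        rw [Nat.sub_add_cancel (by omega)] at h3
        simp only [g, h, if_false, iff_false]
        rw [h3]
        intro h4
        exact (hne s hs).2 (sub_eq_zero.2 (add_left_cancel h4))
    refine ⟨gpat w (2 ^ (d + 1)) g, ⟨(mem_FHT_iff _ _).2 ⟨g, hg, rfl⟩,
      (gpat_inter_iff (fun i => i < 2 ^ d)).2 hgi⟩, ?_⟩
    rintro T' ⟨hT', hi⟩
    obtain ⟨k, hk, rfl⟩ := (mem_FHT_iff _ _).1 hT'
    have hki := (gpat_inter_iff (fun i => i < 2 ^ d)).1 hi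
    obtain ⟨s1, hs1, hn1, hk1⟩ := uniq k hk hki
    obtain ⟨s2, hs2, hn2, hk2⟩ := uniq g hg hgi
    obtain rfl := flip s s1 s2 hs hs1 hs2 hn1 hn2
    rw [gpat_eq_iff]
    intro i hi
    by_cases h : i < 2 ^ d
    · rw [(hk1 i h).1, (hk2 i h).1]
    · have a := (hk1 (i - 2 ^ d) (by omega)).2
      have b := (hk2 (i - 2 ^ d) (by omega)).2
      rw [Nat.sub_add_cancel (by omega)] at a b
      rw [a, b]
  · intro T hT
    obtain ⟨f, ⟨hf, s, hs, h2⟩, rfl⟩ := (mem_FHT_iff _ _).1 hT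
    have uniq : ∀ g, isPat w (d + 1) g → (∀ i < 2 ^ (d + 1), (f i = g i ↔ 2 ^ d ≤ i)) →
        ∃ s', (s' = 0 ∨ s' = 1) ∧ s' ≠ s ∧
          ∀ i < 2 ^ d, g i = f i + (s - s') ∧ g (i + 2 ^ d) = f (i + 2 ^ d) := by
      rintro g ⟨hg, s', hs', h2'⟩ h
      have ht : ∀ i < 2 ^ d, g (i + 2 ^ d) = f (i + 2 ^ d) :=
        fun i hi => ((h _ (by omega)).2 (by omega)).symm
      have hq : ∀ i < 2 ^ d, g i + (g (2 ^ d - 1) - g 0) + s' =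
          f i + (f (2 ^ d - 1) - f 0) + s := by
        intro i hi
        rw [← h2' i hi, ← h2 i hi, ht i hi]
      have hb : ∀ i < 2 ^ d, g i = f i + (s - s') := by
        intro i hi
        linear_combination hq i hi - hq (2 ^ d - 1) (by omega) + hq 0 hp
      refine ⟨s', hs', ?_, fun i hi => ⟨hb i hi, ht i hi⟩⟩
      rintro rfl
      have := (h 0 (by omega)).1 (by rw [hb 0 hp]; ring)
      omega
    let g : ℕ → ZMod w := fun i => if i < 2 ^ d then f i + (s - (1 - s)) else f i
    have hg : isPat w (d + 1) g := by
      refine ⟨isPat_congr d (fun i hi => by simp [g, hi]) (isPat_shift (s - (1 - s)) d hf),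
        1 - s, (hne s hs).1, ?_⟩
      intro i hi
      have h5 : 2 ^ d - 1 < 2 ^ d := by omega
      have h6 : ¬ (i + 2 ^ d < 2 ^ d) := by omega
      simp only [g, hi, hp, h5, h6, if_true, if_false]
      rw [h2 i hi]
      ring
    have hgi : ∀ i < 2 ^ (d + 1), (f i = g i ↔ 2 ^ d ≤ i) := by
      intro i hi
      by_cases h : i < 2 ^ d
      · simp only [g, h, if_true]
        constructor
        · intro h4
          exact absurd (left_eq_add.1 h4) (hne s hs).2
        · intro h4
          omega
      · simp only [g, h, if_false, true_iff]
        omega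
    refine ⟨gpat w (2 ^ (d + 1)) g, ⟨(mem_FHT_iff _ _).2 ⟨g, hg, rfl⟩,
      (gpat_inter_iff (fun i => 2 ^ d ≤ i)).2 hgi⟩, ?_⟩
    rintro T' ⟨hT', hi⟩
    obtain ⟨k, hk, rfl⟩ := (mem_FHT_iff _ _).1 hT'
    have hki := (gpat_inter_iff (fun i => 2 ^ d ≤ i)).1 hi
    obtain ⟨s1, hs1, hn1, hk1⟩ := uniq k hk hki
    obtain ⟨s2, hs2, hn2, hk2⟩ := uniq g hg hgi
    obtain rfl := flip s s1 s2 hs hs1 hs2 hn1 hn2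
    rw [gpat_eq_iff]
    intro i hi
    by_cases h : i < 2 ^ d
    · rw [(hk1 i h).1, (hk2 i h).1]
    · have a := (hk1 (i - 2 ^ d) (by omega)).2
      have b := (hk2 (i - 2 ^ d) (by omega)).2
      rw [Nat.sub_add_cancel (by omega)] at a b
      rw [a, b]
end

section
/- For every finite nonempty pattern set 𝒯 of nonempty finite patterns on an image, every binary-union straight-line program computing 𝒯 has at least (3/2) · (V(𝒯)/r(𝒯)) · log₃(V(𝒯)/|𝒯|) steps; i.e. OR2(𝒯) ≥ (3/2)·(V(𝒯)/r(𝒯))·log₃(V(𝒯)/|𝒯|). -/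
/-- An admissible operand of step `t` of a binary-union straight-line program
`s : Fin g → Finset α`: a singleton pixel or some earlier step. -/
def IsOperand {α : Type*} {g : ℕ} (s : Fin g → Finset α) (t : Fin g) (A : Finset α) : Prop :=
  (∃ p, A = {p}) ∨ ∃ u, u < t ∧ A = s u

/-- `s` is a binary-union straight-line program: each step is the union of two admissible
operands. -/
def ValidProg {α : Type*} [DecidableEq α] {g : ℕ} (s : Fin g → Finset α) : Prop :=
  ∀ t, ∃ A B, IsOperand s t A ∧ IsOperand s t B ∧ s t = A ∪ B

/-- The program `s` computes the pattern family `𝒯`: every pattern of `𝒯` is a singleton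
or appears among the steps of `s`. -/
def Computes {α : Type*} {g : ℕ} (s : Fin g → Finset α) (𝒯 : Finset (Finset α)) : Prop :=
  ∀ T ∈ 𝒯, (∃ p, T = {p}) ∨ ∃ t, s t = T

/-- `OR2 𝒯` is the minimal number of steps (binary gates) over all binary-union
straight-line programs computing `𝒯`. -/
noncomputable def OR2 {α : Type*} [DecidableEq α] (𝒯 : Finset (Finset α)) : ℕ :=
  sInf {g | ∃ s : Fin g → Finset α, ValidProg s ∧ Computes s 𝒯}

/-- The common intersection `⋂_{T ∈ M} T` of a family of patterns
(equal to `∅` when `M` is empty). -/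
def interF (M : Finset (Finset (ℕ × ℕ))) : Finset (ℕ × ℕ) :=
  (M.sup id).filter fun p => ∀ T ∈ M, p ∈ T

/-- The volume `V(𝒯) = Σ_{T ∈ 𝒯} |T|` of a pattern set. -/
def vol (𝒯 : Finset (Finset (ℕ × ℕ))) : ℕ := ∑ T ∈ 𝒯, T.card

/-- The self-intersection measure `r(𝒯)`: the maximum of the intersection area
`S(R) = |R| · |⋂_{T ∈ R} T|` over nonempty subfamilies `R ⊆ 𝒯`. -/
def rmeas (𝒯 : Finset (Finset (ℕ × ℕ))) : ℕ :=
  (𝒯.powerset.filter fun R => R.Nonempty).sup fun R => R.card * (interF R).card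

theorem entropy_aux (x m : ℝ) (hx : 0 ≤ x) (hm : 0 < m) :
    x * Real.log m + x - m ≤ x * Real.log x := by
  rcases hx.eq_or_lt with h | h
  · subst h; simp; exact hm.le
  · have h1 := Real.one_sub_inv_le_log_of_pos (div_pos h hm)
    rw [Real.log_div h.ne' hm.ne', inv_div] at h1
    have h2 := mul_le_mul_of_nonneg_left h1 hx
    have h3 : x * (1 - m / x) = x - m := by field_simp
    rw [h3] at h2
    linarith

theorem split_aux (a b : ℝ) (ha : 0 ≤ a) (hb : 0 ≤ b) :
    (a + b) * Real.log (a + b) ≤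
      a * Real.log a + b * Real.log b + (a + b) * Real.log 2 := by
  rcases (add_nonneg ha hb).eq_or_lt with h | h
  · have h1 : a = 0 := by linarith
    have h2 : b = 0 := by linarith
    subst h1; subst h2; simp
  · have hm : 0 < (a + b) / 2 := by linarith
    have h1 := entropy_aux a _ ha hm
    have h2 := entropy_aux b _ hb hm
    rw [Real.log_div h.ne' (by norm_num)] at h1 h2
    linarith

theorem singleton_aux {α : Type*} (P : Finset α) (p : α) (h : P ⊆ {p}) :
    (P.card : ℝ) * Real.log P.card = 0 := by
  rcases Finset.subset_singleton_iff.1 h with h | h <;> subst h <;> simp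

theorem gate_aux {α : Type*} [DecidableEq α] {g : ℕ} (s : Fin g → Finset α)
    (hs : ValidProg s) (t : Fin g) : ∀ P ⊆ s t, ∃ E : Finset (Fin g × α),
      (∀ x ∈ E, x.1 ≤ t ∧ s x.1 ⊆ s t ∧ x.2 ∈ s x.1 ∧ x.2 ∈ P) ∧
      (P.card : ℝ) * Real.log P.card ≤ E.card * Real.log 2 := by
  induction t using WellFoundedLT.induction with
  | ind t ih =>
  intro P hP
  obtain ⟨A, B, hA, hB, hAB⟩ := hs t
  have key : ∀ C, IsOperand s t C → C ⊆ s t → ∀ Q ⊆ C, ∃ E : Finset (Fin g × α),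
      (∀ x ∈ E, x.1 < t ∧ s x.1 ⊆ s t ∧ x.2 ∈ s x.1 ∧ x.2 ∈ Q) ∧
      (Q.card : ℝ) * Real.log Q.card ≤ E.card * Real.log 2 := by
    intro C hC hCt Q hQ
    rcases hC with ⟨p, rfl⟩ | ⟨u, hu, rfl⟩
    · exact ⟨∅, by simp, by rw [singleton_aux Q p hQ]; simp⟩
    · obtain ⟨E, hE, hc⟩ := ih u hu Q hQ
      refine ⟨E, fun x hx => ?_, hc⟩
      obtain ⟨h1, h2, h3, h4⟩ := hE x hx
      exact ⟨h1.trans_lt hu, h2.trans hCt, h3, h4⟩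
  obtain ⟨E1, hE1, hc1⟩ := key A hA (hAB ▸ Finset.subset_union_left) (P ∩ A)
    Finset.inter_subset_right
  obtain ⟨E2, hE2, hc2⟩ := key B hB (hAB ▸ Finset.subset_union_right) (P \ A) (by
    intro x hx
    have h1 := Finset.mem_sdiff.1 hx
    have h2 := hP h1.1
    rw [hAB, Finset.mem_union] at h2
    exact h2.resolve_left h1.2)
  have hd12 : Disjoint E1 E2 := by
    rw [Finset.disjoint_left]
    intro x h1 h2
    exact (Finset.mem_sdiff.1 (hE2 x h2).2.2.2).2 (Finset.mem_inter.1 (hE1 x h1).2.2.2).2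
  have hd : Disjoint (P.image fun p => (t, p)) (E1 ∪ E2) := by
    rw [Finset.disjoint_left]
    intro x h1 h2
    obtain ⟨p, _, rfl⟩ := Finset.mem_image.1 h1
    rcases Finset.mem_union.1 h2 with h | h
    · exact lt_irrefl _ (hE1 _ h).1
    · exact lt_irrefl _ (hE2 _ h).1
  refine ⟨(P.image fun p => (t, p)) ∪ (E1 ∪ E2), ?_, ?_⟩
  · intro x hx
    rcases Finset.mem_union.1 hx with h | h
    · obtain ⟨p, hp, rfl⟩ := Finset.mem_image.1 h
      exact ⟨le_rfl, subset_rfl, hP hp, hp⟩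
    · rcases Finset.mem_union.1 h with h | h
      · obtain ⟨h1, h2, h3, h4⟩ := hE1 x h
        exact ⟨h1.le, h2, h3, (Finset.mem_inter.1 h4).1⟩
      · obtain ⟨h1, h2, h3, h4⟩ := hE2 x h
        exact ⟨h1.le, h2, h3, (Finset.mem_sdiff.1 h4).1⟩
  · rw [Finset.card_union_of_disjoint hd, Finset.card_union_of_disjoint hd12,
      Finset.card_image_of_injective _ (Prod.mk_right_injective t)]
    have hcard : (P.card : ℝ) = ((P ∩ A).card : ℝ) + ((P \ A).card : ℝ) := by
      exact_mod_cast (Finset.card_inter_add_card_sdiff P A).symm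
    have h := split_aux ((P ∩ A).card : ℝ) ((P \ A).card : ℝ) (by positivity) (by positivity)
    rw [← hcard] at h
    push_cast
    linarith

theorem pattern_aux {α : Type*} [DecidableEq α] {g : ℕ} (s : Fin g → Finset α)
    (hs : ValidProg s) (T : Finset α) (hT : (∃ p, T = {p}) ∨ ∃ t, s t = T) :
    (T.card : ℝ) * Real.log T.card ≤
      ((∑ u : Fin g, if s u ⊆ T then (s u).card else 0 : ℕ) : ℝ) * Real.log 2 := by
  rcases hT with ⟨p, rfl⟩ | ⟨t, rfl⟩
  · rw [singleton_aux {p} p subset_rfl]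
    have := Real.log_nonneg (x := 2) (by norm_num)
    positivity
  · obtain ⟨E, hE, hc⟩ := gate_aux s hs t (s t) subset_rfl
    refine hc.trans ?_
    gcongr
    have hsub : E ⊆ Finset.univ.biUnion fun u : Fin g =>
        (if s u ⊆ s t then s u else ∅).image fun p => (u, p) := by
      intro x hx
      obtain ⟨_, h2, h3, _⟩ := hE x hx
      simp only [Finset.mem_biUnion, Finset.mem_univ, true_and, Finset.mem_image]
      exact ⟨x.1, x.2, by rw [if_pos h2]; exact h3, rfl⟩
    refine (Finset.card_le_card hsub).trans (Finset.card_biUnion_le.trans ?_)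
    refine Finset.sum_le_sum fun u _ => Finset.card_image_le.trans ?_
    split_ifs <;> simp

theorem prog_snoc {α : Type*} [DecidableEq α] {g : ℕ} (s : Fin g → Finset α)
    (hs : ValidProg s) (a : α) (B : Finset α) (hB : (∃ p, B = {p}) ∨ ∃ u, B = s u) :
    ValidProg (Fin.snoc (α := fun _ => Finset α) s ({a} ∪ B)) := by
  intro t
  induction t using Fin.lastCases with
  | last =>
    refine ⟨{a}, B, Or.inl ⟨a, rfl⟩, ?_, by simp⟩
    rcases hB with h | ⟨u, rfl⟩
    · exact Or.inl h
    · exact Or.inr ⟨u.castSucc, Fin.castSucc_lt_last u, by simp⟩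
  | cast t =>
    have lift : ∀ C, IsOperand s t C →
        IsOperand (Fin.snoc (α := fun _ => Finset α) s ({a} ∪ B)) t.castSucc C := by
      rintro C (h | ⟨u, hu, rfl⟩)
      · exact Or.inl h
      · exact Or.inr ⟨u.castSucc, by simpa using hu, by simp⟩
    obtain ⟨A, C, hA, hC, h⟩ := hs t
    exact ⟨A, C, lift A hA, lift C hC, by simpa using h⟩

theorem prog_add {α : Type*} [DecidableEq α] {g : ℕ} (s : Fin g → Finset α)
    (hs : ValidProg s) (T : Finset α) (hT : T.Nonempty) :
    ∃ (g' : ℕ) (s' : Fin g' → Finset α), ValidProg s' ∧ (∀ u, ∃ v, s' v = s u) ∧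
      ∃ v, s' v = T := by
  induction hT using Finset.Nonempty.cons_induction with
  | singleton a =>
    refine ⟨g + 1, _, prog_snoc s hs a {a} (Or.inl ⟨a, rfl⟩), fun u => ⟨u.castSucc, by simp⟩,
      Fin.last g, by simp⟩
  | cons a T ha _ ih =>
    obtain ⟨g', s', h1, h2, v, hv⟩ := ih
    refine ⟨g' + 1, _, prog_snoc s' h1 a T (Or.inr ⟨v, hv.symm⟩), fun u => ?_,
      Fin.last g', by simp⟩
    obtain ⟨w, hw⟩ := h2 u
    exact ⟨w.castSucc, by simpa using hw⟩

theorem prog_exists {α : Type*} [DecidableEq α] (𝒯 : Finset (Finset α))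
    (hT : ∀ T ∈ 𝒯, T.Nonempty) :
    ∃ (g : ℕ) (s : Fin g → Finset α), ValidProg s ∧ ∀ T ∈ 𝒯, ∃ t, s t = T := by
  induction 𝒯 using Finset.induction_on with
  | empty => exact ⟨0, Fin.elim0, fun t => t.elim0, by simp⟩
  | insert T 𝒯 _ ih =>
    obtain ⟨g, s, h1, h2⟩ := ih fun S hS => hT S (Finset.mem_insert_of_mem hS)
    obtain ⟨g', s', h3, h4, h5⟩ := prog_add s h1 T (hT T (Finset.mem_insert_self _ _))
    refine ⟨g', s', h3, fun S hS => ?_⟩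
    rcases Finset.mem_insert.1 hS with rfl | hS
    · exact h5
    · obtain ⟨u, rfl⟩ := h2 S hS
      exact h4 u

theorem rmeas_aux (𝒯 : Finset (Finset (ℕ × ℕ))) (A : Finset (ℕ × ℕ)) :
    (∑ T ∈ 𝒯, if A ⊆ T then A.card else 0) ≤ rmeas 𝒯 := by
  rw [← Finset.sum_filter, Finset.sum_const, smul_eq_mul]
  rcases (𝒯.filter fun T => A ⊆ T).eq_empty_or_nonempty with h | h
  · rw [h]; simp
  · have hmem : (𝒯.filter fun T => A ⊆ T) ∈ 𝒯.powerset.filter fun R => R.Nonempty :=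
      Finset.mem_filter.2 ⟨Finset.mem_powerset.2 (Finset.filter_subset _ _), h⟩
    refine le_trans (Nat.mul_le_mul_left _ (Finset.card_le_card ?_))
      (Finset.le_sup (f := fun R => R.card * (interF R).card) hmem)
    intro p hp
    have hall : ∀ T ∈ 𝒯.filter fun T => A ⊆ T, p ∈ T := fun T hT' =>
      (Finset.mem_filter.1 hT').2 hp
    obtain ⟨T, hT'⟩ := h
    exact Finset.mem_filter.2 ⟨Finset.mem_sup.2 ⟨T, hT', hall T hT'⟩, hall⟩

/-- For every finite nonempty pattern set `𝒯` of nonempty patterns on an image, every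
binary-union straight-line program computing `𝒯` has at least
`(3/2) · (V(𝒯)/r(𝒯)) · log₃(V(𝒯)/|𝒯|)` steps, i.e.
`OR2(𝒯) ≥ (3/2) · (V(𝒯)/r(𝒯)) · log₃(V(𝒯)/|𝒯|)`. -/
theorem or2_lower_bound (𝒯 : Finset (Finset (ℕ × ℕ))) (h𝒯 : 𝒯.Nonempty)
    (hT : ∀ T ∈ 𝒯, T.Nonempty) :
    (3 / 2 : ℝ) * ((vol 𝒯 : ℝ) / (rmeas 𝒯 : ℝ)) *
        Real.logb 3 ((vol 𝒯 : ℝ) / (𝒯.card : ℝ)) ≤ (OR2 𝒯 : ℝ) := by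
  have hne : {g | ∃ s : Fin g → Finset (ℕ × ℕ), ValidProg s ∧ Computes s 𝒯}.Nonempty := by
    obtain ⟨g, s, h1, h2⟩ := prog_exists 𝒯 hT
    exact ⟨g, s, h1, fun T h => Or.inr (h2 T h)⟩
  have hmem : ∃ s : Fin (OR2 𝒯) → Finset (ℕ × ℕ), ValidProg s ∧ Computes s 𝒯 :=
    Nat.sInf_mem hne
  obtain ⟨s, hs, hc⟩ := hmem
  have hl2 : 0 < Real.log 2 := Real.log_pos (by norm_num)
  have hl3 : 0 < Real.log 3 := Real.log_pos (by norm_num)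
  have hn : (0 : ℝ) < 𝒯.card := by exact_mod_cast h𝒯.card_pos
  have hVn : (𝒯.card : ℝ) ≤ vol 𝒯 := by
    have : 𝒯.card ≤ vol 𝒯 := by
      rw [Finset.card_eq_sum_ones]
      exact Finset.sum_le_sum fun T h => (hT T h).card_pos
    exact_mod_cast this
  have hV : (0 : ℝ) < vol 𝒯 := hn.trans_le hVn
  have hL : 0 ≤ Real.log ((vol 𝒯 : ℝ) / 𝒯.card) :=
    Real.log_nonneg ((one_le_div hn).2 hVn)
  -- Jensen
  have hJ : (vol 𝒯 : ℝ) * Real.log ((vol 𝒯 : ℝ) / 𝒯.card) ≤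
      ∑ T ∈ 𝒯, (T.card : ℝ) * Real.log T.card := by
    have h := Finset.sum_le_sum fun T (_ : T ∈ 𝒯) =>
      entropy_aux (T.card : ℝ) ((vol 𝒯 : ℝ) / 𝒯.card) (by positivity) (div_pos hV hn)
    rw [Finset.sum_sub_distrib, Finset.sum_add_distrib, ← Finset.sum_mul,
      Finset.sum_const, nsmul_eq_mul, mul_div_cancel₀ _ hn.ne'] at h
    have hv : (vol 𝒯 : ℝ) = ∑ T ∈ 𝒯, (T.card : ℝ) := by simp [vol]
    rw [← hv] at h
    linarith
  -- double counting
  have hD : ∑ T ∈ 𝒯, (T.card : ℝ) * Real.log T.card ≤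
      (OR2 𝒯 : ℝ) * rmeas 𝒯 * Real.log 2 := by
    refine (Finset.sum_le_sum fun T h => pattern_aux s hs T (hc T h)).trans ?_
    rw [← Finset.sum_mul]
    refine mul_le_mul_of_nonneg_right ?_ hl2.le
    have : (∑ T ∈ 𝒯, ∑ u, if s u ⊆ T then (s u).card else 0) ≤ OR2 𝒯 * rmeas 𝒯 := by
      rw [Finset.sum_comm]
      refine (Finset.sum_le_sum fun u _ => rmeas_aux 𝒯 (s u)).trans ?_
      simp
    exact_mod_cast this
  have h23 : 3 * Real.log 2 ≤ 2 * Real.log 3 := by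
    have h1 : Real.log ((2 : ℝ) ^ 3) ≤ Real.log ((3 : ℝ) ^ 2) :=
      Real.log_le_log (by norm_num) (by norm_num)
    rw [Real.log_pow, Real.log_pow] at h1
    exact_mod_cast h1
  rcases Nat.eq_zero_or_pos (rmeas 𝒯) with hr | hr
  · simp [hr]
  have hr' : (0 : ℝ) < rmeas 𝒯 := by exact_mod_cast hr
  have hmain : (vol 𝒯 : ℝ) * Real.log ((vol 𝒯 : ℝ) / 𝒯.card) ≤
      (OR2 𝒯 : ℝ) * rmeas 𝒯 * Real.log 2 := hJ.trans hD
  have hfin : 3 * ((vol 𝒯 : ℝ) * Real.log ((vol 𝒯 : ℝ) / 𝒯.card)) ≤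
      (OR2 𝒯 : ℝ) * (2 * rmeas 𝒯 * Real.log 3) := by
    have h0 : (0 : ℝ) ≤ (OR2 𝒯 : ℝ) * rmeas 𝒯 := by positivity
    have := mul_le_mul_of_nonneg_left h23 h0
    linarith
  have heq : (3 / 2 : ℝ) * ((vol 𝒯 : ℝ) / (rmeas 𝒯 : ℝ)) *
        Real.logb 3 ((vol 𝒯 : ℝ) / (𝒯.card : ℝ)) =
      3 * ((vol 𝒯 : ℝ) * Real.log ((vol 𝒯 : ℝ) / 𝒯.card)) /
        (2 * rmeas 𝒯 * Real.log 3) := by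
    rw [Real.logb]
    field_simp
  rw [heq, div_le_iff₀ (by positivity)]
  exact hfin
end
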